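/- Let S be the unilateral shift on ℓ²(ℕ) and S* its adjoint. Then the operator S + S* has no eigenvalues: for every λ ∈ ℂ, the only ξ ∈ ℓ²(ℕ) with (S + S*)ξ = λ·ξ is ξ = 0. -/

import Mathlib

/-!
In coordinates the eigenvalue equation is the recurrence `ξ 1 = λ ξ 0`,
`ξ (n + 2) + ξ n = λ ξ (n + 1)`. The quadratic form
`ξ (n + 1) ^ 2 - λ ξ (n + 1) ξ n + ξ n ^ 2` is constant along every solution, and the boundary
condition at `0` makes its value `ξ 0 ^ 2`. The coordinates of a vector of `ℓ²` tend to `0`, hence so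
does the quadratic form; therefore `ξ 0 = 0`, and the recurrence gives `ξ = 0`.
-/

/-- A solution of the recurrence that tends to zero vanishes; no case split on the roots of
`z ^ 2 - lam * z + 1` is needed, thanks to the conserved quadratic form. -/
lemma eq_zero_of_recurrence_of_tendsto (lam : ℂ) (x : ℕ → ℂ) (h1 : x 1 = lam * x 0)
    (h2 : ∀ n, x n + x (n + 2) = lam * x (n + 1))
    (hx : Filter.Tendsto x Filter.atTop (nhds 0)) (n : ℕ) : x n = 0 := by
  have hconst : ∀ n, x (n + 1) ^ 2 - lam * x (n + 1) * x n + x n ^ 2 = x 0 ^ 2 := by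
    intro n
    induction n with
    | zero => rw [zero_add, h1]; ring
    | succ k ih =>
      rw [← ih]
      linear_combination (x (k + 2) - x k) * h2 k
  have hx' : Filter.Tendsto (fun n => x (n + 1)) Filter.atTop (nhds 0) :=
    hx.comp (Filter.tendsto_add_atTop_nat 1)
  have hlim : Filter.Tendsto (fun n => x (n + 1) ^ 2 - lam * x (n + 1) * x n + x n ^ 2)
      Filter.atTop (nhds 0) := by
    simpa using ((hx'.pow 2).sub ((hx'.const_mul lam).mul hx)).add (hx.pow 2)
  simp only [hconst] at hlim
  have h0 : x 0 = 0 := by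
    simpa using tendsto_nhds_unique tendsto_const_nhds hlim
  have hpair : x n = 0 ∧ x (n + 1) = 0 := by
    induction n with
    | zero => exact ⟨h0, by simp [h1, h0]⟩
    | succ k ih =>
      refine ⟨ih.2, ?_⟩
      simpa [ih.1, ih.2] using h2 k
  exact hpair.1

lemma tendsto_coord_zero (ξ : lp (fun _ : ℕ => ℂ) 2) :
    Filter.Tendsto (fun n => ξ n) Filter.atTop (nhds 0) := by
  have hs := ((lp.memℓp ξ).summable (by norm_num)).tendsto_atTop_zero
  have h := hs.sqrt
  rw [tendsto_zero_iff_norm_tendsto_zero]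
  simpa [Real.sqrt_sq] using h

lemma adjoint_shift_apply
    (S : lp (fun _ : ℕ => ℂ) 2 →L[ℂ] lp (fun _ : ℕ => ℂ) 2)
    (hS0 : ∀ ξ : lp (fun _ : ℕ => ℂ) 2, S ξ 0 = 0)
    (hS : ∀ (ξ : lp (fun _ : ℕ => ℂ) 2) (n : ℕ), S ξ (n + 1) = ξ n)
    (ξ : lp (fun _ : ℕ => ℂ) 2) (n : ℕ) :
    ContinuousLinearMap.adjoint S ξ n = ξ (n + 1) := by
  have hsingle : S (lp.single 2 n (1 : ℂ)) = lp.single 2 (n + 1) (1 : ℂ) := by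
    ext k
    cases k with
    | zero => simp [hS0]
    | succ k => simp [hS, Pi.single_apply]
  have h := ContinuousLinearMap.adjoint_inner_right S (lp.single 2 n (1 : ℂ)) ξ
  rw [hsingle, lp.inner_single_left, lp.inner_single_left] at h
  simpa using h

/-- The operator `S + S*` on `ℓ²(ℕ)` has no eigenvalues at all. -/
theorem shift_plus_adjoint_no_eigenvalues
    (S : lp (fun _ : ℕ => ℂ) 2 →L[ℂ] lp (fun _ : ℕ => ℂ) 2)
    (hS0 : ∀ ξ : lp (fun _ : ℕ => ℂ) 2, S ξ 0 = 0)
    (hS : ∀ (ξ : lp (fun _ : ℕ => ℂ) 2) (n : ℕ), S ξ (n + 1) = ξ n) :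
    ∀ (lam : ℂ) (ξ : lp (fun _ : ℕ => ℂ) 2),
      (S + ContinuousLinearMap.adjoint S) ξ = lam • ξ → ξ = 0 := by
  intro lam ξ h
  have hcoord : ∀ n, S ξ n + ξ (n + 1) = lam * ξ n := by
    intro n
    have hn := congrArg (fun η : lp (fun _ : ℕ => ℂ) 2 => η n) h
    simpa [adjoint_shift_apply S hS0 hS] using hn
  ext n
  refine eq_zero_of_recurrence_of_tendsto lam (fun n => ξ n) ?_ ?_ (tendsto_coord_zero ξ) n
  · simpa [hS0] using hcoord 0
  · intro k
    simpa [hS] using hcoord (k + 1)
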